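/- Let (x_k) be the sequence generated by the backtracking algorithm. Then: (i) for every k ≥ 0, min over 0 ≤ i ≤ k of ‖∇f(x_i)‖ ≤ ((Lh + 2)/(2α)) sqrt((f(x₀) − f⋆)/((k+1)h)); (ii) if f is convex, there exists a constant C > 0 such that f(x_k) − f⋆ ≤ C/k for all k ≥ 1; (iii) if f satisfies the Polyak–Łojasiewicz inequality with parameter μ > 0, then f(x_k) − f⋆ ≤ exp(−8α²μkh/(Lh + 2)²)(f(x₀) − f⋆) for all k ≥ 0. -/

import Mathlib

open RealInnerProductSpace

/-!
If `∇f` is `K`-Lipschitz, the descent lemma shows that every step size `η ≤ 2 / (K h + 2)` passes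
the line-search test, so the last rejected trial is larger than this and the accepted one is at
least `c = 2 α / (K h + 2)`. Hence each iteration decreases `f` by at least `h c² ‖∇f(x_k)‖²`.
Telescoping gives the bound on the gradients, and combining with the Polyak–Łojasiewicz inequality
gives linear convergence. If `f` is convex, the decrease controls the quadratic term in the
expansion of `‖x_{k+1} - z‖²`, so that `‖x_k - z‖² + h (f(x_k) - f(z))` drops by at least
`2 h η_k (f(x_k) - f(z))` at each iteration, and telescoping gives the rate `1 / k`.
-/

open Real Set Finset NNReal

section RealSequences

variable {a : ℕ → ℝ}

theorem exists_le_div_of_succ_add_le {d : ℕ → ℝ} (had : ∀ k, a (k + 1) + d k ≤ a k) (k : ℕ) :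
    ∃ i ≤ k, d i ≤ (a 0 - a (k + 1)) / (k + 1) := by
  have hsum : ∑ i ∈ range (k + 1), d i ≤
      ∑ _i ∈ range (k + 1), (a 0 - a (k + 1)) / ((k : ℝ) + 1) := by
    calc ∑ i ∈ range (k + 1), d i
        ≤ ∑ i ∈ range (k + 1), (a i - a (i + 1)) := sum_le_sum fun i _ => by linarith [had i]
      _ = a 0 - a (k + 1) := sum_range_sub' a (k + 1)
      _ = ∑ _i ∈ range (k + 1), (a 0 - a (k + 1)) / ((k : ℝ) + 1) := by
        rw [sum_const, card_range, nsmul_eq_mul, Nat.cast_succ, mul_div_cancel₀ _ (by positivity)]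
  obtain ⟨i, hi, hdi⟩ := exists_le_of_sum_le nonempty_range_add_one hsum
  exact ⟨i, mem_range_succ_iff.mp hi, hdi⟩

theorem exists_le_sqrt_of_succ_add_mul_sq_le {g : ℕ → ℝ} {b s : ℝ} (hs : 0 < s)
    (hb : ∀ k, b ≤ a k) (hag : ∀ k, a (k + 1) + s * g k ^ 2 ≤ a k) (k : ℕ) :
    ∃ i ≤ k, g i ≤ √((a 0 - b) / ((k + 1) * s)) := by
  obtain ⟨i, hik, hi⟩ := exists_le_div_of_succ_add_le hag k
  refine ⟨i, hik, le_sqrt_of_sq_le ?_⟩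
  rw [← div_div, le_div_iff₀' hs]
  exact hi.trans (by gcongr; exact hb (k + 1))

theorem le_exp_neg_mul_of_succ_add_mul_le {r : ℝ} (ha : ∀ k, 0 ≤ a k)
    (har : ∀ k, a (k + 1) + r * a k ≤ a k) (k : ℕ) : a k ≤ exp (-(k * r)) * a 0 := by
  have hcontract (j : ℕ) : a (j + 1) ≤ exp (-r) * a j := calc
    a (j + 1) ≤ (1 - r) * a j := by linarith [har j]
    _ ≤ exp (-r) * a j := mul_le_mul_of_nonneg_right (one_sub_le_exp_neg r) (ha j)
  rw [← mul_neg, exp_nat_mul]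
  exact le_geom (exp_pos _).le k fun j _ => hcontract j

end RealSequences

variable {E : Type*} [NormedAddCommGroup E] [InnerProductSpace ℝ E] {f : E → ℝ} {f' : E → E}

section Gradient

variable [CompleteSpace E]

theorem hasDerivAt_comp_lineMap_of_hasGradientAt {g x y : E} {t : ℝ}
    (hf : HasGradientAt f g (AffineMap.lineMap x y t)) :
    HasDerivAt (fun t : ℝ => f (AffineMap.lineMap x y t)) ⟪g, y - x⟫ t := by
  have hcomp := hf.hasFDerivAt.comp_hasDerivAt t (AffineMap.hasDerivAt_lineMap (a := x) (b := y))
  rw [InnerProductSpace.toDual_apply_apply] at hcomp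
  exact hcomp

theorem add_inner_le_of_convexOn_of_hasGradientAt {s : Set E} {g x y : E} (hconv : ConvexOn ℝ s f)
    (hf : HasGradientAt f g x) (hx : x ∈ s) (hy : y ∈ s) : f x + ⟪g, y - x⟫ ≤ f y := by
  have hderiv : HasDerivAt (fun t : ℝ => f (AffineMap.lineMap x y t)) ⟪g, y - x⟫ 0 :=
    hasDerivAt_comp_lineMap_of_hasGradientAt (by rwa [AffineMap.lineMap_apply_zero])
  have hslope := (hconv.comp_affineMap (AffineMap.lineMap (k := ℝ) x y)).le_slope_of_hasDerivAt
    (x := 0) (y := 1) (by simpa using hx) (by simpa using hy) one_pos hderiv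
  simp only [slope_def_field, Function.comp_apply, AffineMap.lineMap_apply_one,
    AffineMap.lineMap_apply_zero, sub_zero, div_one] at hslope
  linarith

theorem le_add_inner_add_of_lipschitzWith_gradient {K : ℝ≥0} (hf : ∀ x, HasGradientAt f (f' x) x)
    (hLip : LipschitzWith K f') (x y : E) :
    f y ≤ f x + ⟪f' x, y - x⟫ + K / 2 * ‖y - x‖ ^ 2 := by
  let B : ℝ → ℝ := fun t => f x + t * ⟪f' x, y - x⟫ + K / 2 * t ^ 2 * ‖y - x‖ ^ 2
  have hline (t : ℝ) := hasDerivAt_comp_lineMap_of_hasGradientAt (hf (AffineMap.lineMap x y t))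
  have hB (t : ℝ) : HasDerivAt B (⟪f' x, y - x⟫ + K * t * ‖y - x‖ ^ 2) t := by
    have hlin := ((hasDerivAt_id t).mul_const ⟪f' x, y - x⟫).const_add (f x)
    have hquad := ((hasDerivAt_pow 2 t).const_mul ((K : ℝ) / 2)).mul_const (‖y - x‖ ^ 2)
    exact (hlin.add hquad).congr_deriv (by push_cast; ring)
  have hderiv_le : ∀ t ∈ Ico (0 : ℝ) 1,
      ⟪f' (AffineMap.lineMap x y t), y - x⟫ ≤ ⟪f' x, y - x⟫ + K * t * ‖y - x‖ ^ 2 := by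
    intro t ht
    have hgrad : ‖f' (AffineMap.lineMap x y t) - f' x‖ ≤ K * (t * ‖y - x‖) := by
      simpa only [dist_eq_norm, AffineMap.lineMap_apply_module', add_sub_cancel_right, norm_smul,
        norm_of_nonneg ht.1] using hLip.dist_le_mul (AffineMap.lineMap x y t) x
    calc ⟪f' (AffineMap.lineMap x y t), y - x⟫
        = ⟪f' x, y - x⟫ + ⟪f' (AffineMap.lineMap x y t) - f' x, y - x⟫ := by
          rw [inner_sub_left]; ring
      _ ≤ ⟪f' x, y - x⟫ + K * (t * ‖y - x‖) * ‖y - x‖ := by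
          grw [real_inner_le_norm (f' (AffineMap.lineMap x y t) - f' x), hgrad]
      _ = ⟪f' x, y - x⟫ + K * t * ‖y - x‖ ^ 2 := by ring
  have hle := image_le_of_deriv_right_le_deriv_boundary
    (fun t _ => (hline t).continuousAt.continuousWithinAt)
    (fun t _ => (hline t).hasDerivWithinAt) (by simp [B])
    (fun t _ => (hB t).continuousAt.continuousWithinAt)
    (fun t _ => (hB t).hasDerivWithinAt) hderiv_le (right_mem_Icc.mpr zero_le_one)
  simpa [B] using hle

/-- Convexity bounds the cross term of `‖(x - z) - (h * η) • g‖ ^ 2`, and the decrease of `f` its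
quadratic term. -/
theorem norm_sub_sq_add_mul_gradient_step_le {h η : ℝ} {g x : E} (hh : 0 ≤ h) (hη : 0 ≤ η)
    (hconv : ConvexOn ℝ univ f) (hf : HasGradientAt f g x)
    (hdec : f (x - (h * η) • g) + h * η ^ 2 * ‖g‖ ^ 2 ≤ f x) (z : E) :
    ‖x - (h * η) • g - z‖ ^ 2 + h * (f (x - (h * η) • g) - f z) + 2 * h * η * (f x - f z) ≤
      ‖x - z‖ ^ 2 + h * (f x - f z) := by
  have hexpand : ‖x - (h * η) • g - z‖ ^ 2 =
      ‖x - z‖ ^ 2 + 2 * (h * η) * ⟪g, z - x⟫ + h * (h * η ^ 2 * ‖g‖ ^ 2) := by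
    rw [sub_right_comm, norm_sub_sq_real, inner_smul_right, real_inner_comm, ← neg_sub z x,
      inner_neg_right, norm_smul, mul_pow, norm_eq_abs, sq_abs]
    ring
  have hcross := mul_le_mul_of_nonneg_left
    (add_inner_le_of_convexOn_of_hasGradientAt hconv hf (mem_univ x) (mem_univ z))
    (by positivity : 0 ≤ 2 * (h * η))
  have hquad := mul_le_mul_of_nonneg_left hdec hh
  linarith

end Gradient

/-- The line-search functional `F_h(η; x)`: the trial step size `η` is accepted at `x` when this is
nonpositive. The argument `f'` stands for `∇f`. -/
def lineSearchGap (f : E → ℝ) (f' : E → E) (h η : ℝ) (x : E) : ℝ :=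
  f (x - (η * h) • f' x) - f x + h * η ^ 2 * ‖f' x‖ ^ 2

/-- `x` is a run of the backtracking algorithm with contraction factor `α` and base step `h`, where
`m k` is the number of rejected trials at iteration `k`, so that `η_k = α ^ m k`. -/
structure IsBacktrackingSeq (f : E → ℝ) (f' : E → E) (α h : ℝ) (x : ℕ → E) (m : ℕ → ℕ) : Prop where
  gap_nonpos : ∀ k, lineSearchGap f f' h (α ^ m k) (x k) ≤ 0
  gap_pos_of_lt : ∀ k, ∀ j < m k, 0 < lineSearchGap f f' h (α ^ j) (x k)
  succ_eq : ∀ k, x (k + 1) = x k - (h * α ^ m k) • f' (x k)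

theorem lineSearchGap_nonpos_of_mul_le_two [CompleteSpace E] {K : ℝ≥0} {h η : ℝ}
    (hf : ∀ x, HasGradientAt f (f' x) x) (hLip : LipschitzWith K f') (hh : 0 ≤ h) (hη : 0 ≤ η)
    (hηK : η * (K * h + 2) ≤ 2) (x : E) :
    lineSearchGap f f' h η x ≤ 0 := by
  have hdescent := le_add_inner_add_of_lipschitzWith_gradient hf hLip x (x - (η * h) • f' x)
  rw [sub_sub_cancel_left, inner_neg_right, real_inner_smul_right, real_inner_self_eq_norm_sq,
    norm_neg, norm_smul, norm_of_nonneg (by positivity)] at hdescent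
  calc lineSearchGap f f' h η x
      ≤ h * η * ‖f' x‖ ^ 2 / 2 * (η * (K * h + 2) - 2) := by unfold lineSearchGap; linarith
    _ ≤ 0 := mul_nonpos_of_nonneg_of_nonpos (by positivity) (by linarith)

namespace IsBacktrackingSeq

variable {α h : ℝ} {x : ℕ → E} {m : ℕ → ℕ}

theorem succ_add_le (hx : IsBacktrackingSeq f f' α h x m) (k : ℕ) :
    f (x (k + 1)) + h * (α ^ m k) ^ 2 * ‖f' (x k)‖ ^ 2 ≤ f (x k) := by
  have hgap := hx.gap_nonpos k
  rw [lineSearchGap, mul_comm (α ^ m k) h, ← hx.succ_eq] at hgap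
  linarith

theorem antitone_comp (hx : IsBacktrackingSeq f f' α h x m) (hh : 0 ≤ h) :
    Antitone fun k => f (x k) :=
  antitone_nat_of_succ_le fun k => (le_add_of_nonneg_right (by positivity)).trans (hx.succ_add_le k)

theorem succ_add_mul_sq_le {c : ℝ} (hx : IsBacktrackingSeq f f' α h x m) (hh : 0 ≤ h) (hc : 0 ≤ c)
    (hstep : ∀ k, c ≤ α ^ m k) (k : ℕ) :
    f (x (k + 1)) + h * (c * ‖f' (x k)‖) ^ 2 ≤ f (x k) := by
  grw [hstep k, mul_pow, ← mul_assoc]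
  exact hx.succ_add_le k

theorem exists_norm_gradient_le {b c : ℝ} (hx : IsBacktrackingSeq f f' α h x m) (hh : 0 < h)
    (hc : 0 < c) (hstep : ∀ k, c ≤ α ^ m k) (hb : ∀ y, b ≤ f y) (k : ℕ) :
    ∃ i ≤ k, ‖f' (x i)‖ ≤ c⁻¹ * √((f (x 0) - b) / ((k + 1) * h)) := by
  obtain ⟨i, hik, hi⟩ := exists_le_sqrt_of_succ_add_mul_sq_le hh (fun k => hb (x k))
    (hx.succ_add_mul_sq_le hh.le hc.le hstep) k
  exact ⟨i, hik, (le_inv_mul_iff₀ hc).mpr hi⟩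

theorem sub_le_exp_mul_of_polyakLojasiewicz {b c μ : ℝ} (hx : IsBacktrackingSeq f f' α h x m)
    (hh : 0 ≤ h) (hc : 0 ≤ c) (hstep : ∀ k, c ≤ α ^ m k) (hb : ∀ y, b ≤ f y)
    (hPL : ∀ y, μ * (f y - b) ≤ (1 / 2) * ‖f' y‖ ^ 2) (k : ℕ) :
    f (x k) - b ≤ exp (-(k * (2 * μ * h * c ^ 2))) * (f (x 0) - b) := by
  refine le_exp_neg_mul_of_succ_add_mul_le (a := fun k => f (x k) - b)
    (fun k => sub_nonneg.mpr (hb (x k))) (fun k => ?_) k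
  have hgrad := mul_le_mul_of_nonneg_left (hPL (x k)) (by positivity : 0 ≤ 2 * h * c ^ 2)
  linarith [hx.succ_add_mul_sq_le hh hc hstep k]

variable [CompleteSpace E]

theorem div_le_pow {K : ℝ≥0} (hx : IsBacktrackingSeq f f' α h x m)
    (hf : ∀ x, HasGradientAt f (f' x) x) (hLip : LipschitzWith K f') (hα0 : 0 ≤ α)
    (hα1 : α ≤ 1) (hh : 0 ≤ h) (k : ℕ) :
    2 * α / (K * h + 2) ≤ α ^ m k := by
  rw [div_le_iff₀ (by positivity)]
  rcases hm : m k with _ | j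
  · have : 0 ≤ K * h := by positivity
    linarith
  · have hrejected : 2 < α ^ j * (K * h + 2) := by
      by_contra! hle
      exact (hx.gap_pos_of_lt k j (by lia)).not_ge
        (lineSearchGap_nonpos_of_mul_le_two hf hLip hh (by positivity) hle (x k))
    calc 2 * α ≤ α ^ j * (K * h + 2) * α := by gcongr
      _ = α ^ (j + 1) * (K * h + 2) := by ring

theorem sub_le_div_of_convexOn {c : ℝ} {z : E} {k : ℕ} (hx : IsBacktrackingSeq f f' α h x m)
    (hf : ∀ x, HasGradientAt f (f' x) x) (hconv : ConvexOn ℝ univ f) (hh : 0 < h) (hc : 0 < c)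
    (hstep : ∀ k, c ≤ α ^ m k) (hz : f z ≤ f (x (k + 1))) :
    f (x (k + 1)) - f z ≤
      (‖x 0 - z‖ ^ 2 + h * (f (x 0) - f z)) / (2 * h * c) / (k + 1) := by
  have hlyap (j : ℕ) : (‖x (j + 1) - z‖ ^ 2 + h * (f (x (j + 1)) - f z)) +
      2 * h * α ^ m j * (f (x j) - f z) ≤ ‖x j - z‖ ^ 2 + h * (f (x j) - f z) := by
    have hdec := hx.succ_add_le j
    rw [hx.succ_eq] at hdec ⊢
    exact norm_sub_sq_add_mul_gradient_step_le hh.le (hc.le.trans (hstep j)) hconv (hf (x j)) hdec z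
  obtain ⟨i, hik, hi⟩ := exists_le_div_of_succ_add_le
    (a := fun j => ‖x j - z‖ ^ 2 + h * (f (x j) - f z)) hlyap k
  have hmono : f (x (k + 1)) ≤ f (x i) := hx.antitone_comp hh.le (by lia)
  have hfinal : 0 ≤ ‖x (k + 1) - z‖ ^ 2 + h * (f (x (k + 1)) - f z) := by
    have := sub_nonneg.mpr hz
    positivity
  rw [div_right_comm, le_div_iff₀' (by positivity)]
  calc 2 * h * c * (f (x (k + 1)) - f z)
      ≤ 2 * h * α ^ m i * (f (x i) - f z) := by
        have hη := hstep i
        exact mul_le_mul (by gcongr) (by gcongr) (sub_nonneg.mpr hz)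
          (mul_nonneg (by positivity) (hc.le.trans hη))
    _ ≤ _ := hi
    _ ≤ (‖x 0 - z‖ ^ 2 + h * (f (x 0) - f z)) / (k + 1) := by
        gcongr
        exact sub_le_self _ hfinal

theorem exists_sub_le_div_of_convexOn {c : ℝ} (hx : IsBacktrackingSeq f f' α h x m)
    (hf : ∀ x, HasGradientAt f (f' x) x) (hconv : ConvexOn ℝ univ f) (hh : 0 < h) (hc : 0 < c)
    (hstep : ∀ k, c ≤ α ^ m k) (z : E) :
    ∃ C : ℝ, 0 < C ∧ ∀ k : ℕ, 1 ≤ k → f (x k) - f z ≤ C / k := by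
  let M := (‖x 0 - z‖ ^ 2 + h * (f (x 0) - f z)) / (2 * h * c)
  refine ⟨max M 1, by positivity, fun k hk => ?_⟩
  obtain ⟨j, rfl⟩ := Nat.exists_eq_add_of_le' hk
  rcases le_total (f z) (f (x (j + 1))) with hz | hz
  · refine (hx.sub_le_div_of_convexOn hf hconv hh hc hstep hz).trans ?_
    push_cast
    gcongr
    exact le_max_left M 1
  · exact (sub_nonpos.mpr hz).trans (by positivity)

end IsBacktrackingSeq

theorem stmt_17_general [CompleteSpace E] {K : ℝ≥0} {α h b μ : ℝ} {x : ℕ → E} {m : ℕ → ℕ}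
    (hf : ∀ x, HasGradientAt f (f' x) x) (hLip : LipschitzWith K f') (hb : ∀ y, b ≤ f y)
    (hα0 : 0 < α) (hα1 : α ≤ 1) (hh : 0 < h) (hx : IsBacktrackingSeq f f' α h x m) :
    (∀ k : ℕ, ∃ i ≤ k, ‖f' (x i)‖ ≤
        ((K * h + 2) / (2 * α)) * √((f (x 0) - b) / ((k + 1) * h))) ∧
    (ConvexOn ℝ univ f → ∀ z, ∃ C : ℝ, 0 < C ∧ ∀ k : ℕ, 1 ≤ k → f (x k) - f z ≤ C / k) ∧
    ((∀ y, μ * (f y - b) ≤ (1 / 2) * ‖f' y‖ ^ 2) → ∀ k : ℕ, f (x k) - b ≤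
        exp (-(8 * α ^ 2 * μ * k * h) / (K * h + 2) ^ 2) * (f (x 0) - b)) := by
  have hstep := hx.div_le_pow hf hLip hα0.le hα1 hh.le
  have hc : 0 < 2 * α / (K * h + 2) := by positivity
  refine ⟨fun k => ?_, fun hconv => hx.exists_sub_le_div_of_convexOn hf hconv hh hc hstep,
    fun hPL k => ?_⟩
  · simpa only [inv_div] using hx.exists_norm_gradient_le hh hc hstep hb k
  · convert hx.sub_le_exp_mul_of_polyakLojasiewicz hh.le hc.le hstep hb hPL k using 3
    field_simp
    ring

/-- Convergence rates of the backtracking algorithm (Theorem `thm:convrate_bt`). -/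
theorem stmt_17 (n : ℕ) (hn : 1 ≤ n)
    (f : EuclideanSpace ℝ (Fin n) → ℝ)
    (f' : EuclideanSpace ℝ (Fin n) → EuclideanSpace ℝ (Fin n))
    (hf : ∀ x, HasGradientAt f (f' x) x)
    (L : ℝ) (hL : 0 < L)
    (hLip : ∀ x y, ‖f' x - f' y‖ ≤ L * ‖x - y‖)
    (xstar : EuclideanSpace ℝ (Fin n)) (hstar : ∀ y, f xstar ≤ f y)
    (F : ℝ → ℝ → EuclideanSpace ℝ (Fin n) → ℝ)
    (hF : ∀ (h η : ℝ) (x : EuclideanSpace ℝ (Fin n)),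
      F h η x = f (x - (η * h) • f' x) - f x + h * η ^ 2 * ‖f' x‖ ^ 2)
    (α : ℝ) (hα0 : 0 < α) (hα1 : α < 1)
    (h : ℝ) (hh : 0 < h)
    (x : ℕ → EuclideanSpace ℝ (Fin n)) (η : ℕ → ℝ) (m : ℕ → ℕ)
    (hη : ∀ k : ℕ, η k = α ^ m k)
    (hm : ∀ k : ℕ, F h (α ^ m k) (x k) ≤ 0)
    (hleast : ∀ k : ℕ, ∀ j : ℕ, j < m k → 0 < F h (α ^ j) (x k))
    (hupd : ∀ k : ℕ, x (k + 1) = x k - (h * η k) • f' (x k))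
    (μ : ℝ) :
    (∀ k : ℕ, ∃ i ≤ k, ‖f' (x i)‖ ≤
        ((L * h + 2) / (2 * α)) * Real.sqrt ((f (x 0) - f xstar) / ((k + 1) * h))) ∧
    (ConvexOn ℝ Set.univ f →
      ∃ C : ℝ, 0 < C ∧ ∀ k : ℕ, 1 ≤ k → f (x k) - f xstar ≤ C / k) ∧
    (0 < μ → (∀ y, μ * (f y - f xstar) ≤ (1/2) * ‖f' y‖ ^ 2) →
      ∀ k : ℕ, f (x k) - f xstar ≤
        Real.exp (-(8 * α ^ 2 * μ * k * h) / (L * h + 2) ^ 2) * (f (x 0) - f xstar)) := by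
  have hx : IsBacktrackingSeq f f' α h x m :=
    { gap_nonpos := fun k => (hF h _ _).symm.trans_le (hm k)
      gap_pos_of_lt := fun k j hj => (hleast k j hj).trans_eq (hF h _ _)
      succ_eq := fun k => hη k ▸ hupd k }
  have hLip' : LipschitzWith ⟨L, hL.le⟩ f' :=
    .of_dist_le_mul fun y z => by rw [dist_eq_norm, dist_eq_norm]; exact hLip y z
  obtain ⟨hgrad, hconv, hPL⟩ := stmt_17_general hf hLip' hstar hα0 hα1.le hh hx
  exact ⟨hgrad, fun hc => hconv hc xstar, fun _ => hPL⟩
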